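/- Let A be a bounded, rationally acyclic cochain complex of finitely generated free abelian groups with a chain automorphism σ satisfying σ² = id. Write A⁺ = A^{σ−1} and A⁻ = A^{σ+1} for the subcomplexes given degreewise by the kernels of σ−1 and σ+1, and A' = A/(A⁺ ⊕ A⁻). Then | Σ_i (−1)^i ( log|H^i(A⁺)[2^∞]| − log|H^i(A⁻)[2^∞]| ) | + | Σ_i (−1)^i log|H^i(A')| | ≤ Σ_i log|H^i(A)[2^∞]| + 2·Σ_i log|H^i(A')|, where for a finite abelian group G, G[2^∞] denotes its 2-primary part and |·| denotes cardinality. -/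

import Mathlib

open CategoryTheory CategoryTheory.Limits MonoidalCategory

/-- The complex `A ⊗ ℚ` obtained by tensoring a cochain complex of abelian groups with ℚ. -/
noncomputable def tensorQ (A : CochainComplex (ModuleCat ℤ) ℤ) :
    CochainComplex (ModuleCat ℤ) ℤ :=
  ((tensorRight (ModuleCat.of ℤ ℚ)).mapHomologicalComplex (ComplexShape.up ℤ)).obj A

/-- The `i`-th cohomology group of a cochain complex of abelian groups. -/
noncomputable def Hgrp (i : ℤ) (X : CochainComplex (ModuleCat ℤ) ℤ) : ModuleCat ℤ :=
  (HomologicalComplex.homologyFunctor (ModuleCat ℤ) (ComplexShape.up ℤ) i).obj X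

/-- The cardinality of the 2-primary part `G[2^∞]` of an abelian group. -/
noncomputable def card2primary (G : ModuleCat ℤ) : ℕ :=
  Nat.card (AddCommGroup.primaryComponent G 2)

/-!
Since `(σ + 1) - (σ - 1) = 2` is injective on `A`, so is `A⁺ ⊕ A⁻ ⟶ A`, and since
`(σ + 1)(σ - 1) = 0`, its cokernel `A'` is killed by `2`. In the long exact sequence of
`0 ⟶ A⁺ ⊕ A⁻ ⟶ A ⟶ A' ⟶ 0`, the kernel of `Hⁱ(A⁺) ⊕ Hⁱ(A⁻) ⟶ Hⁱ(A)` is a quotient of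
`Hⁱ⁻¹(A')`, whence
`log |Hⁱ(A⁺)[2^∞]| + log |Hⁱ(A⁻)[2^∞]| ≤ log |Hⁱ⁻¹(A')| + log |Hⁱ(A)[2^∞]|`.
All these logarithms are nonnegative, so the left-hand side bounds the absolute value of the
difference; summing over `i`, and bounding the alternating sum for `A'` termwise, gives the claim.
The same argument works for any endomorphisms `φ`, `ψ` with `φψ = ψφ = 0` and `ψ - φ = n` in place
of `σ - 1`, `σ + 1` and `2`.
-/

section PrimaryComponent

open AddCommGroup

variable {G H K : Type*} [AddCommGroup G] [AddCommGroup H] [AddCommGroup K] (p : ℕ)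

theorem map_primaryComponent_le (f : G →+ H) :
    (primaryComponent G p).map f ≤ primaryComponent H p := by
  rintro _ ⟨x, ⟨k, hk⟩, rfl⟩
  exact ⟨k, by rw [← map_nsmul, hk, map_zero]⟩

theorem card_primaryComponent_congr (e : G ≃+ H) :
    Nat.card (primaryComponent G p) = Nat.card (primaryComponent H p) := by
  have hmap : (primaryComponent G p).map e.toAddMonoidHom = primaryComponent H p :=
    (map_primaryComponent_le p _).antisymm fun y hy ↦
      ⟨e.symm y, map_primaryComponent_le p e.symm.toAddMonoidHom ⟨y, hy, rfl⟩,
        e.apply_symm_apply y⟩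
  rw [← hmap, AddSubgroup.card_map_of_injective e.injective]

theorem primaryComponent_prod :
    primaryComponent (G × H) p = (primaryComponent G p).prod (primaryComponent H p) := by
  refine le_antisymm (AddSubgroup.le_prod_iff.2 ?_) (AddSubgroup.prod_le_iff.2 ?_)
  · exact ⟨map_primaryComponent_le p (.fst G H), map_primaryComponent_le p (.snd G H)⟩
  · exact ⟨map_primaryComponent_le p (.inl G H), map_primaryComponent_le p (.inr G H)⟩

theorem card_primaryComponent_prod :
    Nat.card (primaryComponent (G × H) p) =
      Nat.card (primaryComponent G p) * Nat.card (primaryComponent H p) := by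
  rw [primaryComponent_prod, Nat.card_congr (AddSubgroup.prodEquiv _ _).toEquiv, Nat.card_prod]

theorem card_primaryComponent_le_of_exact {d : K →+ G} {f : G →+ H} (hdf : Function.Exact d f)
    [Finite K] [Finite (primaryComponent H p)] :
    Nat.card (primaryComponent G p) ≤ Nat.card K * Nat.card (primaryComponent H p) := by
  have hker : Nat.card (f.ker.addSubgroupOf (primaryComponent G p)) ≤ Nat.card K := by
    choose lift hlift using fun x : f.ker.addSubgroupOf (primaryComponent G p) ↦ (hdf x).1 x.2
    refine Nat.card_le_card_of_injective lift fun x y hxy ↦ Subtype.ext (Subtype.ext ?_)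
    rw [← hlift x, ← hlift y, hxy]
  calc Nat.card (primaryComponent G p)
    _ = Nat.card (f.ker.addSubgroupOf (primaryComponent G p)) *
          Nat.card ((primaryComponent G p).map f) := by
      rw [← AddSubgroup.relIndex_ker, AddSubgroup.relIndex, AddSubgroup.card_mul_index]
    _ ≤ Nat.card K * Nat.card (primaryComponent H p) :=
      Nat.mul_le_mul hker (AddSubgroup.card_le_of_le (map_primaryComponent_le p f))

variable {p} in
theorem finite_primaryComponent (hp : p ≠ 0) [instG : Module ℤ G] [Module.Finite ℤ G] :
    Finite (primaryComponent G p) := by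
  obtain rfl : instG = AddCommGroup.toIntModule G := Subsingleton.elim _ _
  refine Module.finite_of_fg_torsion (primaryComponent G p).toIntSubmodule ?_
  rintro ⟨x, k, hk⟩
  refine ⟨⟨(p ^ k : ℕ), mem_nonZeroDivisors_of_ne_zero (by positivity)⟩, Subtype.ext ?_⟩
  exact (natCast_zsmul x _).trans hk

end PrimaryComponent

section KernelPair

variable {C : Type*} [Category* C] [Abelian C] {A : C}

theorem mono_desc_kernel_ι {B : C} (φ ψ : A ⟶ B) [Mono (ψ - φ)] :
    Mono (biprod.desc (kernel.ι φ) (kernel.ι ψ)) := by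
  refine Preadditive.mono_of_cancel_zero _ fun {X} f hf ↦ ?_
  have hsum : (f ≫ biprod.fst) ≫ kernel.ι φ + (f ≫ biprod.snd) ≫ kernel.ι ψ = 0 := by
    rw [← hf, biprod.desc_eq, Preadditive.comp_add, Category.assoc, Category.assoc]
  have hsnd : f ≫ biprod.snd = 0 := by
    rw [← cancel_mono (kernel.ι ψ), ← cancel_mono (ψ - φ)]
    simpa using hsum =≫ φ
  have hfst : f ≫ biprod.fst = 0 := by
    rw [← cancel_mono (kernel.ι φ)]
    simpa [hsnd] using hsum
  exact biprod.hom_ext _ _ (by simpa using hfst) (by simpa using hsnd)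

/-- The quotient of `A` by the sum of the kernels of two endomorphisms. For `φ = σ - 1` and
`ψ = σ + 1` this is `A' = A / (A⁺ ⊕ A⁻)`. -/
noncomputable abbrev kernelSumQuotient (φ ψ : A ⟶ A) : C :=
  cokernel (biprod.desc (kernel.ι φ) (kernel.ι ψ))

namespace kernelSumQuotient

/-- The projection `A ⟶ A'`. -/
noncomputable abbrev π (φ ψ : A ⟶ A) : A ⟶ kernelSumQuotient φ ψ :=
  cokernel.π (biprod.desc (kernel.ι φ) (kernel.ι ψ))

variable {φ ψ : A ⟶ A}

theorem shortExact [Mono (ψ - φ)] :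
    (ShortComplex.mk (biprod.desc (kernel.ι φ) (kernel.ι ψ)) (π φ ψ)
      (cokernel.condition _)).ShortExact where
  exact := ShortComplex.exact_cokernel _
  mono_f := mono_desc_kernel_ι φ ψ
  epi_g := inferInstanceAs (Epi (cokernel.π _))

theorem comp_π_of_comp_left_eq_zero {B : C} {θ : B ⟶ A} (hθ : θ ≫ φ = 0) : θ ≫ π φ ψ = 0 := by
  calc θ ≫ π φ ψ
    _ = kernel.lift φ θ hθ ≫ biprod.inl ≫ biprod.desc (kernel.ι φ) (kernel.ι ψ) ≫ π φ ψ := by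
      rw [biprod.inl_desc_assoc, kernel.lift_ι_assoc]
    _ = 0 := by rw [cokernel.condition, comp_zero, comp_zero]

theorem comp_π_of_comp_right_eq_zero {B : C} {θ : B ⟶ A} (hθ : θ ≫ ψ = 0) : θ ≫ π φ ψ = 0 := by
  calc θ ≫ π φ ψ
    _ = kernel.lift ψ θ hθ ≫ biprod.inr ≫ biprod.desc (kernel.ι φ) (kernel.ι ψ) ≫ π φ ψ := by
      rw [biprod.inr_desc_assoc, kernel.lift_ι_assoc]
    _ = 0 := by rw [cokernel.condition, comp_zero, comp_zero]

theorem nsmul_id_eq_zero (hφψ : φ ≫ ψ = 0) (hψφ : ψ ≫ φ = 0) {n : ℕ} (hn : ψ - φ = n • 𝟙 A) :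
    n • 𝟙 (kernelSumQuotient φ ψ) = 0 := by
  rw [← cancel_epi (π φ ψ), Preadditive.comp_nsmul, Category.comp_id, comp_zero]
  calc n • π φ ψ
    _ = (ψ - φ) ≫ π φ ψ := by rw [hn, Preadditive.nsmul_comp, Category.id_comp]
    _ = 0 := by
      rw [Preadditive.sub_comp, comp_π_of_comp_left_eq_zero hψφ,
        comp_π_of_comp_right_eq_zero hφψ, sub_zero]

end kernelSumQuotient

end KernelPair

section Involution

variable {C : Type*} [Category* C] [Preadditive C] {A : C} {σ : End A}

theorem sub_one_comp_add_one_of_sq_eq_one (hσ : σ ^ 2 = 1) :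
    (σ - 1 : End A) ≫ (σ + 1 : End A) = 0 := by
  change (σ + 1) * (σ - 1) = 0
  rw [← (Commute.one_right σ).sq_sub_sq, hσ, one_pow, sub_self]

theorem add_one_comp_sub_one_of_sq_eq_one (hσ : σ ^ 2 = 1) :
    (σ + 1 : End A) ≫ (σ - 1 : End A) = 0 := by
  change (σ - 1) * (σ + 1) = 0
  rw [← (Commute.one_right σ).mul_self_sub_mul_self_eq', ← sq, hσ, one_mul, sub_self]

variable (σ) in
theorem add_one_sub_sub_one : (σ + 1 : End A) - (σ - 1 : End A) = 2 • 𝟙 A := by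
  change σ + 1 - (σ - 1) = 2 • (1 : End A)
  abel

end Involution

section Homology

open AddCommGroup

variable {R ι : Type*} [Ring R] {c : ComplexShape ι}

theorem mono_nsmul_id {X : HomologicalComplex (ModuleCat R) c} {n : ℕ}
    (hn : ∀ i, IsSMulRegular (X.X i) n) : Mono (n • 𝟙 X) :=
  have (i : ι) : Mono ((n • 𝟙 X : X ⟶ X).f i) := (ModuleCat.mono_iff_injective _).2 (hn i)
  HomologicalComplex.mono_of_mono_f _ this

theorem moduleFinite_homology [IsNoetherianRing R] (X : HomologicalComplex (ModuleCat R) c)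
    (i : ι) [Module.Finite R (X.X i)] : Module.Finite R (X.homology i) :=
  have : Module.Finite R (X.cycles i) :=
    .of_injective (X.iCycles i).hom ((ModuleCat.mono_iff_injective _).1 inferInstance)
  .of_surjective (X.homologyπ i).hom ((ModuleCat.epi_iff_surjective _).1 inferInstance)

theorem moduleFinite_X_of_mono [IsNoetherianRing R] {X Y : HomologicalComplex (ModuleCat R) c}
    (f : X ⟶ Y) [Mono f] (i : ι) [Module.Finite R (Y.X i)] : Module.Finite R (X.X i) :=
  .of_injective (f.f i).hom ((ModuleCat.mono_iff_injective _).1 inferInstance)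

theorem moduleFinite_X_of_epi {X Y : HomologicalComplex (ModuleCat R) c} (f : X ⟶ Y) [Epi f]
    (i : ι) [Module.Finite R (X.X i)] : Module.Finite R (Y.X i) :=
  .of_surjective (f.f i).hom ((ModuleCat.epi_iff_surjective _).1 inferInstance)

theorem finite_primaryComponent_homology (X : HomologicalComplex (ModuleCat ℤ) c) (i : ι)
    [Module.Finite ℤ (X.X i)] {p : ℕ} (hp : p ≠ 0) :
    Finite (primaryComponent (X.homology i) p) :=
  have := moduleFinite_homology X i
  finite_primaryComponent hp

theorem finite_homology_of_nsmul_id_eq_zero {X : HomologicalComplex (ModuleCat ℤ) c} {n : ℕ}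
    (hn : n ≠ 0) (hX : n • 𝟙 X = 0) (i : ι) [Module.Finite ℤ (X.X i)] : Finite (X.homology i) := by
  have := moduleFinite_homology X i
  let F := HomologicalComplex.homologyFunctor (ModuleCat ℤ) c i
  have hid : n • 𝟙 (F.obj X) = 0 := by rw [← F.map_id, ← F.map_nsmul, hX, F.map_zero]
  have htorsion (x : X.homology i) : n • x = 0 := ConcreteCategory.congr_hom hid x
  have := finite_primaryComponent (G := X.homology i) hn
  exact Finite.of_surjective (Subtype.val : primaryComponent (X.homology i) n → X.homology i)
    fun x ↦ ⟨⟨x, 1, by simpa using htorsion x⟩, rfl⟩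

theorem card_primaryComponent_homology_biprod (p : ℕ) (X Y : HomologicalComplex (ModuleCat R) c)
    (i : ι) :
    Nat.card (primaryComponent ((X ⊞ Y).homology i) p) =
      Nat.card (primaryComponent (X.homology i) p) *
        Nat.card (primaryComponent (Y.homology i) p) := by
  have := preservesBinaryBiproducts_of_preservesBiproducts
    (HomologicalComplex.homologyFunctor (ModuleCat R) c i)
  let e := (HomologicalComplex.homologyFunctor (ModuleCat R) c i).mapBiprod X Y ≪≫
    ModuleCat.biprodIsoProd _ _
  rw [← card_primaryComponent_prod]
  exact card_primaryComponent_congr p e.toLinearEquiv.toAddEquiv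

theorem card_primaryComponent_homology_le (p : ℕ)
    {S : ShortComplex (HomologicalComplex (ModuleCat R) c)} (hS : S.ShortExact) {i j : ι}
    (hij : c.Rel i j) [Finite (S.X₃.homology i)]
    [Finite (primaryComponent (S.X₂.homology j) p)] :
    Nat.card (primaryComponent (S.X₁.homology j) p) ≤
      Nat.card (S.X₃.homology i) * Nat.card (primaryComponent (S.X₂.homology j) p) :=
  card_primaryComponent_le_of_exact p (d := (hS.δ i j hij).hom.toAddMonoidHom)
    (f := (HomologicalComplex.homologyMap S.f j).hom.toAddMonoidHom)
    ((ShortComplex.ShortExact.moduleCat_exact_iff_function_exact _).1 (hS.homology_exact₁ i j hij))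

theorem log_card_primaryComponent_homology_kernel_add_le
    {A : HomologicalComplex (ModuleCat ℤ) c} {φ ψ : A ⟶ A} (hφψ : φ ≫ ψ = 0) (hψφ : ψ ≫ φ = 0)
    {n p : ℕ} (hn : n ≠ 0) (hp : p ≠ 0) (hsub : ψ - φ = n • 𝟙 A)
    (hreg : ∀ i, IsSMulRegular (A.X i) n) {i j : ι} (hij : c.Rel i j)
    [Module.Finite ℤ (A.X i)] [Module.Finite ℤ (A.X j)] :
    Real.log (Nat.card (primaryComponent ((kernel φ).homology j) p)) +
        Real.log (Nat.card (primaryComponent ((kernel ψ).homology j) p)) ≤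
      Real.log (Nat.card ((kernelSumQuotient φ ψ).homology i)) +
        Real.log (Nat.card (primaryComponent (A.homology j) p)) := by
  have hmono : Mono (ψ - φ) := hsub ▸ mono_nsmul_id hreg
  have : Finite (primaryComponent (A.homology j) p) := finite_primaryComponent_homology A j hp
  have : Module.Finite ℤ ((kernelSumQuotient φ ψ).X i) :=
    moduleFinite_X_of_epi (kernelSumQuotient.π φ ψ) i
  have : Finite ((kernelSumQuotient φ ψ).homology i) :=
    finite_homology_of_nsmul_id_eq_zero hn (kernelSumQuotient.nsmul_id_eq_zero hφψ hψφ hsub) i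
  have hfinite (θ : A ⟶ A) : Finite (primaryComponent ((kernel θ).homology j) p) :=
    have := moduleFinite_X_of_mono (kernel.ι θ) j
    finite_primaryComponent_homology (kernel θ) j hp
  have := hfinite φ
  have := hfinite ψ
  have hcard := card_primaryComponent_homology_le p
    (kernelSumQuotient.shortExact (φ := φ) (ψ := ψ)) hij
  rw [card_primaryComponent_homology_biprod] at hcard
  rw [← Real.log_mul (mod_cast Nat.card_pos.ne') (mod_cast Nat.card_pos.ne'),
    ← Real.log_mul (mod_cast Nat.card_pos.ne') (mod_cast Nat.card_pos.ne')]
  exact Real.log_le_log (mod_cast Nat.mul_pos Nat.card_pos Nat.card_pos) (mod_cast hcard)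

end Homology

theorem abs_finsum_neg_one_zpow_mul_le {f g : ℤ → ℝ} (hg : g.HasFiniteSupport)
    (hfg : ∀ i, |f i| ≤ g i) : |∑ᶠ i, (-1 : ℝ) ^ i * f i| ≤ ∑ᶠ i, g i := by
  have hsupp : (fun i ↦ (-1 : ℝ) ^ i * f i).support ⊆ g.support := fun i hi hgi ↦
    hi (by simp [abs_nonpos_iff.1 (hgi ▸ hfg i)])
  rw [finsum_eq_sum_of_support_subset _ (hsupp.trans hg.coe_toFinset.superset), finsum_eq_sum _ hg]
  refine (Finset.abs_sum_le_sum_abs _ _).trans (Finset.sum_le_sum fun i _ ↦ ?_)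
  simpa [abs_mul, abs_zpow] using hfg i

theorem abs_finsum_sub_add_abs_finsum_le {u v q a : ℤ → ℝ} (hu : ∀ i, 0 ≤ u i)
    (hv : ∀ i, 0 ≤ v i) (hq : ∀ i, 0 ≤ q i) (hq_fin : q.HasFiniteSupport)
    (ha_fin : a.HasFiniteSupport) (huv : ∀ i, u i + v i ≤ q (i - 1) + a i) :
    |∑ᶠ i, (-1 : ℝ) ^ i * (u i - v i)| + |∑ᶠ i, (-1 : ℝ) ^ i * q i| ≤
      ∑ᶠ i, a i + 2 * ∑ᶠ i, q i := by
  have hshift_fin : (fun i ↦ q (i - 1)).HasFiniteSupport :=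
    hq_fin.preimage (sub_left_injective (b := (1 : ℤ))).injOn
  have hshift : ∑ᶠ i, q (i - 1) = ∑ᶠ i, q i := finsum_comp_equiv (Equiv.subRight (1 : ℤ))
  have hdiff (i : ℤ) : |u i - v i| ≤ q (i - 1) + a i :=
    (abs_sub_le_of_nonneg_of_le (hu i) (le_add_of_nonneg_right (hv i)) (hv i)
      (le_add_of_nonneg_left (hu i))).trans (huv i)
  calc |∑ᶠ i, (-1 : ℝ) ^ i * (u i - v i)| + |∑ᶠ i, (-1 : ℝ) ^ i * q i|
    _ ≤ ∑ᶠ i, (q (i - 1) + a i) + ∑ᶠ i, q i :=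
      add_le_add (abs_finsum_neg_one_zpow_mul_le (hshift_fin.add ha_fin) hdiff)
        (abs_finsum_neg_one_zpow_mul_le hq_fin fun i ↦ (abs_of_nonneg (hq i)).le)
    _ = ∑ᶠ i, a i + 2 * ∑ᶠ i, q i := by
      rw [finsum_add_distrib hshift_fin ha_fin, hshift]
      ring

theorem hasFiniteSupport_log_card {ι : Type*} {M : ι → Type*}
    (hM : {i | ¬ Subsingleton (M i)}.Finite) :
    (fun i ↦ Real.log (Nat.card (M i))).HasFiniteSupport := by
  refine hM.subset fun i hi hsub ↦ hi ?_
  have hcard : Nat.card (M i) ≤ 1 := Finite.card_le_one_iff_subsingleton.2 hsub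
  rcases Nat.le_one_iff_eq_zero_or_eq_one.1 hcard with h | h <;> simp [h]

theorem finite_not_isZero_X_of_bounded {C : Type*} [Category* C] [HasZeroMorphisms C]
    {A : CochainComplex C ℤ} (hA : ∃ N : ℕ, ∀ i : ℤ, (N : ℤ) ≤ |i| → IsZero (A.X i)) :
    {i | ¬ IsZero (A.X i)}.Finite := by
  obtain ⟨N, hN⟩ := hA
  refine (Set.finite_Ioo (-N : ℤ) N).subset fun i hi ↦ abs_lt.1 ?_
  exact lt_of_not_ge fun hNi ↦ hi (hN i hNi)

theorem stmt_8_general {A : CochainComplex (ModuleCat ℤ) ℤ}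
    (hA : ∃ N : ℕ, ∀ i : ℤ, (N : ℤ) ≤ |i| → IsZero (A.X i))
    (hfg : ∀ i, Module.Finite ℤ (A.X i)) {n p : ℕ} (hn : n ≠ 0) (hp : p ≠ 0)
    (hreg : ∀ i, IsSMulRegular (A.X i) n) {φ ψ : A ⟶ A} (hφψ : φ ≫ ψ = 0) (hψφ : ψ ≫ φ = 0)
    (hsub : ψ - φ = n • 𝟙 A) :
    |∑ᶠ i : ℤ, (-1 : ℝ) ^ i *
        (Real.log (Nat.card (AddCommGroup.primaryComponent ((kernel φ).homology i) p)) -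
          Real.log (Nat.card (AddCommGroup.primaryComponent ((kernel ψ).homology i) p)))| +
      |∑ᶠ i : ℤ, (-1 : ℝ) ^ i * Real.log (Nat.card ((kernelSumQuotient φ ψ).homology i))| ≤
    (∑ᶠ i : ℤ, Real.log (Nat.card (AddCommGroup.primaryComponent (A.homology i) p))) +
      2 * ∑ᶠ i : ℤ, Real.log (Nat.card ((kernelSumQuotient φ ψ).homology i)) := by
  have hA_supp := finite_not_isZero_X_of_bounded hA
  refine abs_finsum_sub_add_abs_finsum_le (fun _ ↦ Real.log_natCast_nonneg _)
    (fun _ ↦ Real.log_natCast_nonneg _) (fun _ ↦ Real.log_natCast_nonneg _)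
    (hasFiniteSupport_log_card <| hA_supp.subset fun i hi hAi ↦ hi ?_)
    (hasFiniteSupport_log_card <| hA_supp.subset fun i hi hAi ↦ hi ?_)
    fun i ↦ log_card_primaryComponent_homology_kernel_add_le hφψ hψφ hn hp hsub hreg
      (show (ComplexShape.up ℤ).Rel (i - 1) i from sub_add_cancel i 1)
  · exact ModuleCat.subsingleton_of_isZero
      (HomologicalComplex.ExactAt.of_isZero
        (hAi.of_epi ((kernelSumQuotient.π φ ψ).f i))).isZero_homology
  · have := ModuleCat.subsingleton_of_isZero
      (HomologicalComplex.ExactAt.of_isZero hAi).isZero_homology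
    infer_instance

/-- Let A be a bounded, rationally acyclic cochain complex of finitely
generated free abelian groups with a chain automorphism σ satisfying σ² = id.  Write
A⁺ = A^{σ−1}, A⁻ = A^{σ+1} (degreewise kernels of σ−1 and σ+1) and A' = A/(A⁺ ⊕ A⁻).  Then
|Σ_i (−1)^i (log|H^i(A⁺)[2^∞]| − log|H^i(A⁻)[2^∞]|)| + |Σ_i (−1)^i log|H^i(A')||
  ≤ Σ_i log|H^i(A)[2^∞]| + 2·Σ_i log|H^i(A')|. -/
theorem stmt_8 (A : CochainComplex (ModuleCat ℤ) ℤ)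
    (hAbd : ∃ N : ℕ, ∀ i : ℤ, (N : ℤ) ≤ |i| → IsZero (A.X i))
    (hfree : ∀ i : ℤ, Module.Free ℤ (A.X i)) (hfg : ∀ i : ℤ, Module.Finite ℤ (A.X i))
    (hacyc : ∀ i : ℤ, IsZero (Hgrp i (tensorQ A)))
    (σ : End A) (hσ : σ ^ 2 = 1) :
    |∑ᶠ i : ℤ, (-1 : ℝ) ^ i *
        (Real.log (card2primary (Hgrp i (kernel (σ - 1)))) -
          Real.log (card2primary (Hgrp i (kernel (σ + 1)))))| +
      |∑ᶠ i : ℤ, (-1 : ℝ) ^ i *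
        Real.log (Nat.card
          (Hgrp i (cokernel (biprod.desc (kernel.ι (σ - 1)) (kernel.ι (σ + 1))))))| ≤
    (∑ᶠ i : ℤ, Real.log (card2primary (Hgrp i A))) +
      2 * ∑ᶠ i : ℤ, Real.log (Nat.card
        (Hgrp i (cokernel (biprod.desc (kernel.ι (σ - 1)) (kernel.ι (σ + 1)))))) :=
  stmt_8_general hAbd hfg two_ne_zero two_ne_zero
    (fun i ↦ have := IsAddTorsionFree.of_isTorsionFree ℤ (A.X i); .of_ne_zero two_ne_zero)
    (sub_one_comp_add_one_of_sq_eq_one hσ) (add_one_comp_sub_one_of_sq_eq_one hσ)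
    (add_one_sub_sub_one σ)
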